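/- Assume the loss ℓ(w,x,y) takes values in [0,1]. Then the subtask generalization error satisfies |gen_{Q,E_Q}| ≤ E_{Y'~Q_Y}[E_{Z_{[2n]}}[(1/n^{Y'}) Σ_{i=1}^n sqrt(2·max(𝟙{Y_i^-=Y'}, 𝟙{Y_i^+=Y'})·I_{Z_{[2n]}}(W;U_i))]]. -/

import Mathlib

/-!
Given the super-sample, the weights and a single selector `U i` determine the test-minus-train
loss of the `i`-th pair. Flipping `U i` changes its sign, so it has mean zero once `U i` is
replaced by a fair coin independent of the weights, and by Hoeffding's lemma it is then
`1`-sub-Gaussian. The Donsker–Varadhan inequality bounds its mean under the true joint law by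
`sqrt (2 I_z(W; U i))`. A pair with no sample of class `y` contributes nothing, which gives the
indicator; it remains to average over the super-sample and over the labels.
-/

open MeasureTheory ProbabilityTheory
open scoped ENNReal

noncomputable section

open Classical in
/-- Kullback–Leibler divergence: `∞` unless `μ ≪ ν` and the log-likelihood ratio is
`μ`-integrable. -/
def KL {α : Type*} [MeasurableSpace α] (μ ν : Measure α) : ℝ≥0∞ :=
  if μ ≪ ν ∧ Integrable (llr μ ν) μ then ENNReal.ofReal (∫ x, llr μ ν x ∂μ) else ∞

/-- Fair coin measure on `Bool` (the law of a uniform `{−1,+1}` selector, `true ↔ +1`). -/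
def coin : Measure Bool :=
  (2 : ℝ≥0∞)⁻¹ • Measure.dirac true + (2 : ℝ≥0∞)⁻¹ • Measure.dirac false

/-- Disintegrated conditional mutual information `I_z(A;B)` given `Z = z`, defined through
regular conditional distributions: `KL(P_{A,B|Z=z} ‖ P_{A|Z=z} ⊗ P_{B|Z=z})`. -/
def dCMI {Ω γ α β : Type*} [MeasurableSpace Ω] [MeasurableSpace γ]
    [MeasurableSpace α] [StandardBorelSpace α] [Nonempty α]
    [MeasurableSpace β] [StandardBorelSpace β] [Nonempty β]
    (μ : Measure Ω) [IsFiniteMeasure μ]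
    (A : Ω → α) (B : Ω → β) (Z : Ω → γ) (z : γ) : ℝ≥0∞ :=
  KL (condDistrib (fun ω => (A ω, B ω)) Z μ z)
    ((condDistrib A Z μ z).prod (condDistrib B Z μ z))

/-- The super-sample entry selected by `u`, i.e. `z^{u}` (the training sample):
`zz = (z⁻, z⁺)` and `u = true` means `+1`. -/
def trainSel {𝒵 : Type*} (zz : 𝒵 × 𝒵) (u : Bool) : 𝒵 := if u then zz.2 else zz.1

/-- The super-sample entry not selected by `u`, i.e. `z^{−u}` (the test sample). -/
def testSel {𝒵 : Type*} (zz : 𝒵 × 𝒵) (u : Bool) : 𝒵 := if u then zz.1 else zz.2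

section KullbackLeibler

open scoped NNReal

variable {α : Type*} [MeasurableSpace α] {P Q : Measure α} [IsProbabilityMeasure P]

lemma integral_le_integral_llr_add_log_integral_exp [SigmaFinite Q] {f : α → ℝ} (hPQ : P ≪ Q)
    (hllr : Integrable (llr P Q) P) (hfP : Integrable f P)
    (hfQ : Integrable (fun x ↦ Real.exp (f x)) Q) :
    ∫ x, f x ∂P ≤ ∫ x, llr P Q x ∂P + Real.log (∫ x, Real.exp (f x) ∂Q) := by
  have : NeZero Q := ⟨fun hQ ↦ IsProbabilityMeasure.ne_zero P <|
    Measure.absolutelyContinuous_zero_iff.1 (hQ ▸ hPQ)⟩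
  have : IsProbabilityMeasure (Q.tilted f) := isProbabilityMeasure_tilted hfQ
  have gibbs := InformationTheory.integral_llr_add_sub_measure_univ_nonneg
    (hPQ.trans (absolutelyContinuous_tilted hfQ))
    (integrable_llr_tilted_right hPQ hfP hllr hfQ)
  rw [integral_llr_tilted_right hPQ hfP hfQ hllr, probReal_univ, probReal_univ] at gibbs
  linarith

variable [IsProbabilityMeasure Q] {X : α → ℝ} {c : ℝ≥0}

lemma sq_integral_le_mul_integral_llr_of_hasSubgaussianMGF (hX : HasSubgaussianMGF X c Q)
    (hPQ : P ≪ Q) (hllr : Integrable (llr P Q) P) (hXP : Integrable X P) :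
    (∫ x, X x ∂P) ^ 2 ≤ 2 * c * ∫ x, llr P Q x ∂P := by
  have quadratic_nonneg (t : ℝ) :
      0 ≤ (c / 2 : ℝ) * (t * t) + -(∫ x, X x ∂P) * t + ∫ x, llr P Q x ∂P := by
    have donsker_varadhan := integral_le_integral_llr_add_log_integral_exp hPQ hllr
      (hXP.const_mul t) (hX.integrable_exp_mul t)
    have log_mgf_le : Real.log (∫ x, Real.exp (t * X x) ∂Q) ≤ c * t ^ 2 / 2 :=
      (Real.log_le_iff_le_exp (integral_exp_pos (hX.integrable_exp_mul t))).2 (hX.mgf_le t)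
    rw [integral_const_mul] at donsker_varadhan
    linarith
  have := discrim_le_zero quadratic_nonneg
  rw [discrim] at this
  linarith

lemma enorm_integral_le_rpow_KL_of_hasSubgaussianMGF (hX : HasSubgaussianMGF X c Q) (hc : c ≠ 0)
    (hXP : Integrable X P) : ‖∫ x, X x ∂P‖ₑ ≤ (2 * c * KL P Q) ^ (1 / 2 : ℝ) := by
  unfold KL
  split_ifs with h
  · have hsq := sq_integral_le_mul_integral_llr_of_hasSubgaussianMGF hX h.1 h.2 hXP
    have hofReal : (2 * c : ℝ≥0∞) * ENNReal.ofReal (∫ x, llr P Q x ∂P) =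
        ENNReal.ofReal (2 * c * ∫ x, llr P Q x ∂P) := by
      rw [ENNReal.ofReal_mul (by positivity), ENNReal.ofReal_mul zero_le_two,
        ENNReal.ofReal_ofNat, ENNReal.ofReal_coe_nnreal]
    rw [hofReal, ENNReal.ofReal_rpow_of_nonneg ((sq_nonneg _).trans hsq) (by norm_num),
      ← Real.sqrt_eq_rpow, Real.enorm_eq_ofReal_abs]
    exact ENNReal.ofReal_le_ofReal (Real.abs_le_sqrt hsq)
  · rw [ENNReal.mul_top (by simpa using hc), ENNReal.top_rpow_of_pos (by norm_num)]
    exact le_top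

end KullbackLeibler

lemma sum_lintegral_le_lintegral_sum {α ι : Type*} [MeasurableSpace α] (μ : Measure α)
    (s : Finset ι) (f : ι → α → ℝ≥0∞) :
    ∑ i ∈ s, ∫⁻ a, f i a ∂μ ≤ ∫⁻ a, ∑ i ∈ s, f i a ∂μ := by
  classical
  induction s using Finset.induction_on with
  | empty => simp
  | insert i s hi ih =>
    simp only [Finset.sum_insert hi]
    exact (add_le_add_right ih _).trans (le_lintegral_add _ _)

section Disintegration

variable {Ω β γ : Type*} [MeasurableSpace Ω] [MeasurableSpace β] [StandardBorelSpace β] [Nonempty β]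
  [MeasurableSpace γ] {μ : Measure Ω} [IsFiniteMeasure μ] {X : Ω → γ} {Y : Ω → β}

lemma condDistrib_ae_eq_const_of_indepFun {ν : Measure β} [IsFiniteMeasure ν]
    (hX : AEMeasurable X μ) (hY : HasLaw Y ν μ) (hXY : IndepFun X Y μ) :
    condDistrib Y X μ =ᵐ[μ.map X] Kernel.const γ ν := by
  refine condDistrib_ae_eq_of_measure_eq_compProd X hY.aemeasurable ?_
  rw [hXY.map_prod_eq_prod_map_map hX hY.aemeasurable, hY.map_eq, Measure.compProd_const]

lemma enorm_integral_le_lintegral_enorm_integral_condDistrib {E : Type*} [NormedAddCommGroup E]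
    [NormedSpace ℝ E] {f : γ × β → E} (hX : AEMeasurable X μ) (hY : AEMeasurable Y μ)
    (hf : Integrable f (μ.map fun ω ↦ (X ω, Y ω))) :
    ‖∫ ω, f (X ω, Y ω) ∂μ‖ₑ ≤ ∫⁻ x, ‖∫ y, f (x, y) ∂condDistrib Y X μ x‖ₑ ∂μ.map X := by
  have disintegration : ∫ ω, f (X ω, Y ω) ∂μ =
      ∫ x, ∫ y, f (x, y) ∂condDistrib Y X μ x ∂μ.map X := by
    rw [← integral_map (hX.prodMk hY) hf.aestronglyMeasurable, ← compProd_map_condDistrib hY,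
      Measure.integral_compProd ((compProd_map_condDistrib hY).symm ▸ hf)]
  rw [disintegration]
  exact enorm_integral_le_lintegral_enorm _

end Disintegration

instance isProbabilityMeasure_coin : IsProbabilityMeasure coin where
  measure_univ := by simp [coin, ENNReal.inv_two_add_inv_two]

lemma integral_coin {E : Type*} [NormedAddCommGroup E] [NormedSpace ℝ E] [CompleteSpace E]
    (f : Bool → E) : ∫ u, f u ∂coin = (2 : ℝ)⁻¹ • (f true + f false) := by
  rw [coin, integral_add_measure (.smul_measure .of_finite (by simp))
    (.smul_measure .of_finite (by simp))]
  simp [integral_smul_measure]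

section SuperSampleGap

variable {𝒲 𝒵 : Type*}

/-- Test loss minus training loss on one super-sample pair `zz`, as a function of the weights
`p.1` and the selector `p.2`; `f w z` is the loss of the weights `w` at the sample `z`. -/
def superSampleGap (f : 𝒲 → 𝒵 → ℝ) (zz : 𝒵 × 𝒵) (p : 𝒲 × Bool) : ℝ :=
  f p.1 (testSel zz p.2) - f p.1 (trainSel zz p.2)

variable {f : 𝒲 → 𝒵 → ℝ}

lemma superSampleGap_eq_zero {zz : 𝒵 × 𝒵} (h₁ : ∀ w, f w zz.1 = 0) (h₂ : ∀ w, f w zz.2 = 0)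
    (p : 𝒲 × Bool) : superSampleGap f zz p = 0 := by
  rcases p with ⟨w, _ | _⟩ <;> simp [superSampleGap, testSel, trainSel, h₁, h₂]

lemma superSampleGap_mem_Icc (hf : ∀ w z, f w z ∈ Set.Icc (0 : ℝ) 1) (zz : 𝒵 × 𝒵)
    (p : 𝒲 × Bool) : superSampleGap f zz p ∈ Set.Icc (-1 : ℝ) 1 := by
  have htest := hf p.1 (testSel zz p.2)
  have htrain := hf p.1 (trainSel zz p.2)
  unfold superSampleGap
  exact ⟨by linarith [htest.1, htrain.2], by linarith [htest.2, htrain.1]⟩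

variable [MeasurableSpace 𝒲] [MeasurableSpace 𝒵]

lemma measurable_trainSel : Measurable fun p : (𝒵 × 𝒵) × Bool ↦ trainSel p.1 p.2 :=
  Measurable.ite (measurable_snd (measurableSet_singleton true)) (by fun_prop) (by fun_prop)

lemma measurable_testSel : Measurable fun p : (𝒵 × 𝒵) × Bool ↦ testSel p.1 p.2 :=
  Measurable.ite (measurable_snd (measurableSet_singleton true)) (by fun_prop) (by fun_prop)

lemma measurable_superSampleGap (hf : Measurable (Function.uncurry f)) :
    Measurable (Function.uncurry (superSampleGap f)) := by
  have selector : Measurable fun q : (𝒵 × 𝒵) × 𝒲 × Bool ↦ (q.1, q.2.2) := by fun_prop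
  exact (hf.comp (measurable_snd.fst.prodMk (measurable_testSel.comp selector))).sub
    (hf.comp (measurable_snd.fst.prodMk (measurable_trainSel.comp selector)))

lemma integrable_superSampleGap_comp {α : Type*} [MeasurableSpace α] {μ : Measure α}
    [IsFiniteMeasure μ] (hf : Measurable (Function.uncurry f))
    (hf01 : ∀ w z, f w z ∈ Set.Icc (0 : ℝ) 1) {S : α → 𝒵 × 𝒵} {V : α → 𝒲 × Bool}
    (hS : Measurable S) (hV : Measurable V) :
    Integrable (fun a ↦ superSampleGap f (S a) (V a)) μ :=
  .of_mem_Icc (-1) 1 ((measurable_superSampleGap hf).comp (hS.prodMk hV)).aemeasurable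
    (.of_forall fun _ ↦ superSampleGap_mem_Icc hf01 _ _)

variable {PW : Measure 𝒲} [IsProbabilityMeasure PW]

lemma integral_superSampleGap_prod_coin (hf : Measurable (Function.uncurry f))
    (hf01 : ∀ w z, f w z ∈ Set.Icc (0 : ℝ) 1) (zz : 𝒵 × 𝒵) :
    ∫ p, superSampleGap f zz p ∂PW.prod coin = 0 := by
  rw [integral_prod _ (integrable_superSampleGap_comp hf hf01 measurable_const measurable_id' :
    Integrable (superSampleGap f zz) _)]
  simp [integral_coin, superSampleGap, testSel, trainSel]

lemma hasSubgaussianMGF_superSampleGap (hf : Measurable (Function.uncurry f))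
    (hf01 : ∀ w z, f w z ∈ Set.Icc (0 : ℝ) 1) (zz : 𝒵 × 𝒵) :
    HasSubgaussianMGF (superSampleGap f zz) 1 (PW.prod coin) := by
  have hoeffding := hasSubgaussianMGF_of_mem_Icc_of_integral_eq_zero
    ((measurable_superSampleGap hf).of_uncurry_left.aemeasurable (μ := PW.prod coin))
    (.of_forall (superSampleGap_mem_Icc hf01 zz)) (integral_superSampleGap_prod_coin hf hf01 zz)
  have hoeffding_const : (‖(1 : ℝ) - -1‖₊ / 2) ^ 2 = 1 := by norm_num
  rwa [hoeffding_const] at hoeffding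

lemma enorm_integral_superSampleGap_le_rpow_KL (hf : Measurable (Function.uncurry f))
    (hf01 : ∀ w z, f w z ∈ Set.Icc (0 : ℝ) 1) (zz : 𝒵 × 𝒵) (P : Measure (𝒲 × Bool))
    [IsProbabilityMeasure P] :
    ‖∫ p, superSampleGap f zz p ∂P‖ₑ ≤ (2 * KL P (PW.prod coin)) ^ (1 / 2 : ℝ) := by
  simpa using enorm_integral_le_rpow_KL_of_hasSubgaussianMGF
    (hasSubgaussianMGF_superSampleGap hf hf01 zz) one_ne_zero
    (integrable_superSampleGap_comp hf hf01 measurable_const measurable_id)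

end SuperSampleGap

section ClassLoss

variable {𝒲 𝒳 𝒴 : Type*} [DecidableEq 𝒴] {ℓ : 𝒲 → 𝒳 → 𝒴 → ℝ}

/-- The loss restricted to the samples of class `y`, that is `𝟙{Y = y} ℓ(w, X, Y)`. -/
def classLoss (ℓ : 𝒲 → 𝒳 → 𝒴 → ℝ) (y : 𝒴) (w : 𝒲) (z : 𝒳 × 𝒴) : ℝ :=
  if z.2 = y then ℓ w z.1 z.2 else 0

lemma classLoss_mem_Icc (hℓ01 : ∀ w x y', ℓ w x y' ∈ Set.Icc (0 : ℝ) 1) (y : 𝒴) (w : 𝒲)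
    (z : 𝒳 × 𝒴) : classLoss ℓ y w z ∈ Set.Icc (0 : ℝ) 1 := by
  unfold classLoss
  split_ifs
  exacts [hℓ01 _ _ _, ⟨le_rfl, zero_le_one⟩]

variable [MeasurableSpace 𝒲] [MeasurableSpace 𝒳] [MeasurableSpace 𝒴] [MeasurableSingletonClass 𝒴]

lemma measurable_classLoss (hℓ : Measurable fun p : 𝒲 × 𝒳 × 𝒴 ↦ ℓ p.1 p.2.1 p.2.2) (y : 𝒴) :
    Measurable (Function.uncurry (classLoss ℓ y)) :=
  Measurable.ite (measurable_snd.snd (measurableSet_singleton y)) hℓ measurable_const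

lemma enorm_integral_superSampleGap_classLoss_le
    (hℓ : Measurable fun p : 𝒲 × 𝒳 × 𝒴 ↦ ℓ p.1 p.2.1 p.2.2)
    (hℓ01 : ∀ w x y', ℓ w x y' ∈ Set.Icc (0 : ℝ) 1) (y : 𝒴) (zz : (𝒳 × 𝒴) × (𝒳 × 𝒴))
    (P : Measure (𝒲 × Bool)) [IsProbabilityMeasure P] (PW : Measure 𝒲) [IsProbabilityMeasure PW] :
    ‖∫ p, superSampleGap (classLoss ℓ y) zz p ∂P‖ₑ ≤
      (2 * max (if zz.1.2 = y then (1 : ℝ≥0∞) else 0) (if zz.2.2 = y then (1 : ℝ≥0∞) else 0) *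
        KL P (PW.prod coin)) ^ (1 / 2 : ℝ) := by
  by_cases h : zz.1.2 = y ∨ zz.2.2 = y
  · have indicator_eq_one : max (if zz.1.2 = y then (1 : ℝ≥0∞) else 0)
        (if zz.2.2 = y then (1 : ℝ≥0∞) else 0) = 1 := by
      rcases h with h | h <;> rw [if_pos h] <;> split_ifs <;> simp
    rw [indicator_eq_one, mul_one]
    exact enorm_integral_superSampleGap_le_rpow_KL (measurable_classLoss hℓ y)
      (classLoss_mem_Icc hℓ01 y) zz P
  · obtain ⟨h₁, h₂⟩ := not_or.1 h
    have gap_eq_zero := superSampleGap_eq_zero (f := classLoss ℓ y)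
      (fun _ ↦ if_neg h₁) (fun _ ↦ if_neg h₂)
    simp [gap_eq_zero]

end ClassLoss

section SuperSample

variable {Ω 𝒲 𝒳 𝒴 ι : Type*} [MeasurableSpace Ω]
  [MeasurableSpace 𝒲] [StandardBorelSpace 𝒲] [Nonempty 𝒲]
  [MeasurableSpace 𝒳] [MeasurableSpace 𝒴] [MeasurableSingletonClass 𝒴] [DecidableEq 𝒴]
  {μ : Measure Ω} [IsFiniteMeasure μ] {Z : Ω → ι → (𝒳 × 𝒴) × (𝒳 × 𝒴)} {W : Ω → 𝒲}
  {ℓ : 𝒲 → 𝒳 → 𝒴 → ℝ}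

lemma enorm_integral_superSampleGap_classLoss_le_lintegral_dCMI {V : Ω → Bool} (i : ι)
    (hZ : Measurable Z) (hV : Measurable V) (hW : Measurable W) (hV_law : HasLaw V coin μ)
    (hZV : IndepFun Z V μ)
    (hℓ : Measurable fun p : 𝒲 × 𝒳 × 𝒴 ↦ ℓ p.1 p.2.1 p.2.2)
    (hℓ01 : ∀ w x y', ℓ w x y' ∈ Set.Icc (0 : ℝ) 1) (y : 𝒴) :
    ‖∫ ω, superSampleGap (classLoss ℓ y) (Z ω i) (W ω, V ω) ∂μ‖ₑ ≤
      ∫⁻ z, (2 * max (if (z i).1.2 = y then (1 : ℝ≥0∞) else 0)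
            (if (z i).2.2 = y then (1 : ℝ≥0∞) else 0) * dCMI μ W V Z z) ^ (1 / 2 : ℝ)
        ∂μ.map Z := by
  let gap (q : (ι → (𝒳 × 𝒴) × (𝒳 × 𝒴)) × 𝒲 × Bool) : ℝ :=
    superSampleGap (classLoss ℓ y) (q.1 i) q.2
  have gap_integrable : Integrable gap (μ.map fun ω ↦ (Z ω, W ω, V ω)) :=
    integrable_superSampleGap_comp (measurable_classLoss hℓ y) (classLoss_mem_Icc hℓ01 y)
      (by fun_prop) measurable_snd
  refine (enorm_integral_le_lintegral_enorm_integral_condDistrib hZ.aemeasurable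
    (hW.prodMk hV).aemeasurable gap_integrable).trans (lintegral_mono_ae ?_)
  filter_upwards [condDistrib_ae_eq_const_of_indepFun hZ.aemeasurable hV_law hZV] with z hz
  rw [dCMI, hz, Kernel.const_apply]
  exact enorm_integral_superSampleGap_classLoss_le hℓ hℓ01 y (z i) _ _

/-- The weight `c y` plays the role of `1 / n^y`. -/
theorem subtask_CMI_bound_general [Fintype ι] (Q : Measure 𝒴) {c : 𝒴 → ℝ} (hc : ∀ y, 0 ≤ c y)
    {U : Ω → ι → Bool} (hZ : Measurable Z) (hU : Measurable U) (hW : Measurable W)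
    (hU_law : ∀ i, HasLaw (fun ω ↦ U ω i) coin μ) (hZU : ∀ i, IndepFun Z (fun ω ↦ U ω i) μ)
    (hℓ : Measurable fun p : 𝒲 × 𝒳 × 𝒴 ↦ ℓ p.1 p.2.1 p.2.2)
    (hℓ01 : ∀ w x y', ℓ w x y' ∈ Set.Icc (0 : ℝ) 1) :
    ∫⁻ y, ‖∫ ω, c y * ∑ i, superSampleGap (classLoss ℓ y) (Z ω i) (W ω, U ω i) ∂μ‖ₑ ∂Q ≤
      ∫⁻ y, (∫⁻ z, ENNReal.ofReal (c y) *
            ∑ i, (2 * max (if (z i).1.2 = y then (1 : ℝ≥0∞) else 0)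
                  (if (z i).2.2 = y then (1 : ℝ≥0∞) else 0) *
                dCMI μ W (fun ω ↦ U ω i) Z z) ^ (1 / 2 : ℝ) ∂μ.map Z) ∂Q := by
  have hUi (i : ι) : Measurable fun ω ↦ U ω i := (measurable_pi_apply i).comp hU
  refine lintegral_mono fun y ↦ ?_
  have gap_integrable (i : ι) :
      Integrable (fun ω ↦ superSampleGap (classLoss ℓ y) (Z ω i) (W ω, U ω i)) μ :=
    integrable_superSampleGap_comp (measurable_classLoss hℓ y) (classLoss_mem_Icc hℓ01 y)
      ((measurable_pi_apply i).comp hZ) (hW.prodMk (hUi i))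
  rw [integral_const_mul, integral_finsetSum _ fun i _ ↦ gap_integrable i, enorm_mul,
    Real.enorm_eq_ofReal (hc y)]
  refine le_trans ?_ (lintegral_const_mul_le _ _)
  gcongr
  exact (enorm_sum_le _ _).trans <| (Finset.sum_le_sum fun i _ ↦
    enorm_integral_superSampleGap_classLoss_le_lintegral_dCMI i hZ (hUi i) hW (hU_law i) (hZU i)
      hℓ hℓ01 y).trans (sum_lintegral_le_lintegral_sum _ _ _)

end SuperSample

/-- **Theorem 8 (subtask-CMI bound)**: in the super-sample setting with a bounded loss
`ℓ(w,x,y) ∈ [0,1]` and target label set `A` with `P(Y ∈ A) > 0`, the subtask generalization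
error `gen_{Q,E_Q} = E_{Y'∼Q_Y}[gen_{Y'}]` satisfies
`|gen_{Q,E_Q}| ≤ E_{Y'∼Q_Y}[E_{Z_{[2n]}}[(1/n^{Y'}) Σ_i
    sqrt (2 max(𝟙{Y_i⁻=Y'},𝟙{Y_i⁺=Y'}) I_{Z_{[2n]}}(W;U_i))]]`,
where `Q_Y` is the law of the label conditioned on `{Y ∈ A}`. -/
theorem subtask_CMI_bound
    {Ω 𝒲 𝒳 𝒴 : Type*}
    [mΩ : MeasurableSpace Ω] [StandardBorelSpace Ω] [Nonempty Ω]
    [MeasurableSpace 𝒲] [StandardBorelSpace 𝒲] [Nonempty 𝒲]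
    [MeasurableSpace 𝒳] [StandardBorelSpace 𝒳]
    [MeasurableSpace 𝒴] [Countable 𝒴] [MeasurableSingletonClass 𝒴] [DecidableEq 𝒴]
    (μ : Measure Ω) [IsProbabilityMeasure μ]
    (n : ℕ) (hn : 0 < n)
    (PZ : Measure (𝒳 × 𝒴)) [IsProbabilityMeasure PZ]
    (Z : Ω → Fin n → (𝒳 × 𝒴) × (𝒳 × 𝒴)) (hZ : Measurable Z)
    (U : Ω → Fin n → Bool) (hU : Measurable U)
    (W : Ω → 𝒲) (hW : Measurable W)
    (hlaw : μ.map (fun ω => (Z ω, U ω)) =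
      (Measure.pi fun _ : Fin n => PZ.prod PZ).prod (Measure.pi fun _ : Fin n => coin))
    (hSle : MeasurableSpace.comap (fun ω (i : Fin n) => trainSel (Z ω i) (U ω i))
        inferInstance ≤ mΩ)
    (hMarkov : CondIndepFun
      (MeasurableSpace.comap (fun ω (i : Fin n) => trainSel (Z ω i) (U ω i)) inferInstance)
      hSle W (fun ω => (Z ω, U ω)) μ)
    (ℓ : 𝒲 → 𝒳 → 𝒴 → ℝ) (hℓ : Measurable fun p : 𝒲 × 𝒳 × 𝒴 => ℓ p.1 p.2.1 p.2.2)
    (hℓ01 : ∀ w x y', ℓ w x y' ∈ Set.Icc (0 : ℝ) 1)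
    -- the subtask label set
    (A : Set 𝒴) (hA : MeasurableSet A) (hPA : 0 < PZ (Prod.snd ⁻¹' A)) :
    ENNReal.ofReal
        |∫ y, (∫ ω, (1 / ((n : ℝ) * (PZ (Prod.snd ⁻¹' {y})).toReal)) *
            ∑ i, ((if (testSel (Z ω i) (U ω i)).2 = y then
                    ℓ (W ω) (testSel (Z ω i) (U ω i)).1 (testSel (Z ω i) (U ω i)).2 else 0) -
                  (if (trainSel (Z ω i) (U ω i)).2 = y then
                    ℓ (W ω) (trainSel (Z ω i) (U ω i)).1 (trainSel (Z ω i) (U ω i)).2 else 0))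
            ∂μ)
          ∂((PZ.map Prod.snd)[|A])|
      ≤ ∫⁻ y, (∫⁻ z, ENNReal.ofReal (1 / ((n : ℝ) * (PZ (Prod.snd ⁻¹' {y})).toReal)) *
            ∑ i, (2 * max (if (z i).1.2 = y then (1 : ℝ≥0∞) else 0)
                          (if (z i).2.2 = y then (1 : ℝ≥0∞) else 0) *
                  dCMI μ W (fun ω => U ω i) Z z) ^ (1 / 2 : ℝ)
            ∂(μ.map Z))
          ∂((PZ.map Prod.snd)[|A]) := by
  have law : HasLaw (fun ω ↦ (Z ω, U ω)) ((Measure.pi fun _ : Fin n ↦ PZ.prod PZ).prod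
      (Measure.pi fun _ : Fin n ↦ coin)) μ := ⟨(hZ.prodMk hU).aemeasurable, hlaw⟩
  have Z_law := measurePreserving_fst.comp_hasLaw law
  have U_law := measurePreserving_snd.comp_hasLaw law
  have indep : IndepFun Z U μ := (indepFun_iff_hasLaw_prodMk_prod Z_law U_law).2 law
  rw [← Real.enorm_eq_ofReal_abs]
  exact (enorm_integral_le_lintegral_enorm _).trans <| subtask_CMI_bound_general _
    (fun y ↦ by positivity) hZ hU hW
    (fun i ↦ (measurePreserving_eval _ i).comp_hasLaw U_law)
    (fun i ↦ indep.comp measurable_id (measurable_pi_apply i)) hℓ hℓ01
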